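/- Let n ≥ 3 be an integer and let p ≥ n/(n−2). Then the only classical solution of the Cauchy problem (P) with initial data g ≡ 0 is the identically zero function: if u is a classical solution of (P) with u(x,0) = 0 for all x ≠ 0, then u(x,t) = 0 for all x ∈ ℝⁿ∖{0} and all t ≥ 0. -/

import Mathlib

open scoped BigOperators

/-- The Laplacian of `f : ℝⁿ → ℝ`, expressed as the sum of second directional
derivatives along the standard basis vectors. -/
noncomputable def laplacian {n : ℕ} (f : EuclideanSpace ℝ (Fin n) → ℝ)
    (x : EuclideanSpace ℝ (Fin n)) : ℝ :=
  ∑ i : Fin n, fderiv ℝ (fun y => fderiv ℝ f y (EuclideanSpace.single i 1)) x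
    (EuclideanSpace.single i 1)

/-- A classical solution of the Cauchy problem (P):
`u_t = Δu − u^p` in `(ℝⁿ∖{0}) × (0,∞)`, `u ≥ 0`, `u(·,0) = g`,
with `u` continuous on `(ℝⁿ∖{0}) × [0,∞)`, `C²` in `x` and `C¹` in `t`
on `(ℝⁿ∖{0}) × (0,∞)`. -/
structure IsClassicalSolution (n : ℕ) (p : ℝ) (g : EuclideanSpace ℝ (Fin n) → ℝ)
    (u : EuclideanSpace ℝ (Fin n) → ℝ → ℝ) : Prop where
  continuousOn : ContinuousOn (fun q : EuclideanSpace ℝ (Fin n) × ℝ => u q.1 q.2)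
    {q : EuclideanSpace ℝ (Fin n) × ℝ | q.1 ≠ 0 ∧ 0 ≤ q.2}
  contDiff_space : ∀ x : EuclideanSpace ℝ (Fin n), x ≠ 0 → ∀ t : ℝ, 0 < t →
    ContDiffAt ℝ 2 (fun y => u y t) x
  contDiff_time : ∀ x : EuclideanSpace ℝ (Fin n), x ≠ 0 → ∀ t : ℝ, 0 < t →
    ContDiffAt ℝ 1 (u x) t
  pde : ∀ x : EuclideanSpace ℝ (Fin n), x ≠ 0 → ∀ t : ℝ, 0 < t →
    deriv (u x) t = laplacian (fun y => u y t) x - u x t ^ p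
  nonneg : ∀ x : EuclideanSpace ℝ (Fin n), x ≠ 0 → ∀ t : ℝ, 0 < t → 0 ≤ u x t
  initial : ∀ x : EuclideanSpace ℝ (Fin n), x ≠ 0 → u x 0 = g x

open Filter Metric Module Set Topology
open scoped Laplacian

/-!
Let `M` bound the initial data. Comparison on a ball with `c (R² - |y - z|²) ^ (-2 / (p - 1)) + M`,
which blows up on the boundary, gives the Keller–Osserman bound `u ≤ M + C |x| ^ (-2 / (p - 1))`
without any information on `u` at the origin or at infinity. Hence `u ≤ M + ε` on large spheres, and
since `2 / (p - 1) ≤ n - 2`, near the origin `u` exceeds `M` by at most a multiple of the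
fundamental solution `|x| ^ (2 - n)`. This singularity is removable: on the annulus `δ ≤ |y| ≤ r`,
`c |y| ^ (2 - n) (1 + log (|y| / δ)) ^ (-1 / (p - 1)) + M + ε` is a supersolution for some `c`
independent of `δ`, and it tends to `M + ε` as `δ → 0`. So `u ≤ M` everywhere.
-/

section LocalMax

theorem deriv_deriv_nonpos_of_isLocalMax {f : ℝ → ℝ} {s : ℝ} (hf : IsLocalMax f s)
    (hc : ContinuousAt f s) : deriv (deriv f) s ≤ 0 := by
  by_contra! hpos
  have hmin : IsLocalMin f s := isLocalMin_of_deriv_deriv_pos hpos hf.deriv_eq_zero hc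
  have hconst : f =ᶠ[𝓝 s] fun _ => f s := by
    filter_upwards [hf, hmin] with y hle hge using le_antisymm hle hge
  have hzero : deriv f =ᶠ[𝓝 s] fun _ => 0 := by simpa using hconst.deriv
  simp [hzero.deriv_eq] at hpos

theorem deriv_nonneg_of_isMaxOn_Icc_right {f : ℝ → ℝ} {a b : ℝ} (hab : a < b)
    (hf : DifferentiableAt ℝ f b) (hmax : IsMaxOn f (Icc a b) b) : 0 ≤ deriv f b := by
  have hdir : a - b ∈ posTangentConeAt (Icc a b) b :=
    sub_mem_posTangentConeAt_of_segment_subset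
      ((convex_Icc a b).segment_subset (right_mem_Icc.2 hab.le) (left_mem_Icc.2 hab.le))
  have hle : (a - b) * deriv f b ≤ 0 := by
    simpa using hmax.localize.hasFDerivWithinAt_nonpos
      hf.hasDerivAt.hasFDerivAt.hasFDerivWithinAt hdir
  exact nonneg_of_mul_nonpos_right hle (sub_neg.2 hab)

variable {E : Type*} [NormedAddCommGroup E] [NormedSpace ℝ E] {f : E → ℝ} {x : E}

theorem differentiableAt_fderiv_of_contDiffAt_two (hf : ContDiffAt ℝ 2 f x) :
    DifferentiableAt ℝ (fderiv ℝ f) x :=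
  (hf.fderiv_right (m := 1) (by norm_num)).differentiableAt (by simp)

theorem deriv_deriv_comp_line (hf : ContDiffAt ℝ 2 f x) (v : E) :
    deriv (deriv fun s : ℝ => f (x + s • v)) 0 = fderiv ℝ (fderiv ℝ f) x v v := by
  have hline (s : ℝ) : HasDerivAt (fun s : ℝ => x + s • v) v s := by
    simpa using ((hasDerivAt_id s).smul_const v).const_add x
  have hx : x = x + (0 : ℝ) • v := by simp
  have hfirst : (deriv fun s : ℝ => f (x + s • v)) =ᶠ[𝓝 0] fun s => fderiv ℝ f (x + s • v) v := by
    have hdiff : ∀ᶠ y in 𝓝 x, DifferentiableAt ℝ f y :=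
      (hf.eventually (by simp)).mono fun y hy => hy.differentiableAt (by simp)
    have hnear : Tendsto (fun s : ℝ => x + s • v) (𝓝 0) (𝓝 x) := by
      simpa using (hline 0).continuousAt.tendsto
    filter_upwards [hnear.eventually hdiff] with s hs
    exact (hs.hasFDerivAt.comp_hasDerivAt s (hline s)).deriv
  have hsecond : HasDerivAt (fun s : ℝ => fderiv ℝ f (x + s • v)) (fderiv ℝ (fderiv ℝ f) x v) 0 :=
    (differentiableAt_fderiv_of_contDiffAt_two hf).hasFDerivAt.comp_hasDerivAt_of_eq 0 (hline 0) hx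
  rw [hfirst.deriv_eq]
  simpa using (hsecond.clm_apply (hasDerivAt_const (0 : ℝ) v)).deriv

theorem fderiv_fderiv_apply_self_nonpos_of_isLocalMax (hf : ContDiffAt ℝ 2 f x)
    (hmax : IsLocalMax f x) (v : E) : fderiv ℝ (fderiv ℝ f) x v v ≤ 0 := by
  have hline : ContinuousAt (fun s : ℝ => x + s • v) 0 := by fun_prop
  have hx : x + (0 : ℝ) • v = x := by simp
  rw [← deriv_deriv_comp_line hf v]
  refine deriv_deriv_nonpos_of_isLocalMax ?_ ?_
  · exact IsLocalMax.comp_continuous (g := fun s : ℝ => x + s • v) (by rwa [hx]) hline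
  · exact ContinuousAt.comp (g := f) (by rw [hx]; exact hf.continuousAt) hline

end LocalMax

section NormSq

variable {E : Type*} [NormedAddCommGroup E] [InnerProductSpace ℝ E]

theorem fderiv_norm_sub_sq (z x : E) :
    fderiv ℝ (fun y => ‖y - z‖ ^ 2) x = (2 : ℝ) • innerSL ℝ (x - z) := by
  simpa [two_smul] using ((hasFDerivAt_id x).sub_const z).norm_sq.fderiv

theorem norm_fderiv_norm_sub_sq (z x : E) :
    ‖fderiv ℝ (fun y => ‖y - z‖ ^ 2) x‖ = 2 * ‖x - z‖ := by
  rw [fderiv_norm_sub_sq, norm_smul, innerSL_apply_norm, Real.norm_two]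

theorem contDiff_norm_sub_sq (z : E) : ContDiff ℝ 2 fun y => ‖y - z‖ ^ 2 :=
  (contDiff_id.sub contDiff_const).norm_sq ℝ

end NormSq

section Laplacian

variable {E : Type*} [NormedAddCommGroup E] [InnerProductSpace ℝ E] [FiniteDimensional ℝ E]

theorem laplacian_eq_sum_fderiv_fderiv {ι : Type*} [Fintype ι] (b : OrthonormalBasis ι ℝ E)
    (f : E → ℝ) (x : E) : Δ f x = ∑ i, fderiv ℝ (fderiv ℝ f) x (b i) (b i) := by
  simp [InnerProductSpace.laplacian_eq_iteratedFDeriv_orthonormalBasis f b,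
    iteratedFDeriv_two_apply]

theorem laplacian_eq_innerProductSpace_laplacian {n : ℕ} {f : EuclideanSpace ℝ (Fin n) → ℝ}
    {x : EuclideanSpace ℝ (Fin n)} (hf : ContDiffAt ℝ 2 f x) : laplacian f x = Δ f x := by
  have hdiff : DifferentiableAt ℝ (fderiv ℝ f) x :=
    differentiableAt_fderiv_of_contDiffAt_two hf
  rw [laplacian_eq_sum_fderiv_fderiv (EuclideanSpace.basisFun (Fin n) ℝ), laplacian]
  refine Finset.sum_congr rfl fun i _ => ?_
  rw [fderiv_clm_apply hdiff (differentiableAt_const _)]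
  simp

theorem laplacian_nonpos_of_isLocalMax {f : E → ℝ} {x : E} (hf : ContDiffAt ℝ 2 f x)
    (hmax : IsLocalMax f x) : Δ f x ≤ 0 := by
  rw [laplacian_eq_sum_fderiv_fderiv (stdOrthonormalBasis ℝ E)]
  exact Finset.sum_nonpos fun i _ => fderiv_fderiv_apply_self_nonpos_of_isLocalMax hf hmax _

theorem sum_sq_apply_orthonormalBasis {ι : Type*} [Fintype ι] (b : OrthonormalBasis ι ℝ E)
    (l : E →L[ℝ] ℝ) : ∑ i, l (b i) ^ 2 = ‖l‖ ^ 2 := by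
  obtain ⟨v, rfl⟩ := (InnerProductSpace.toDual ℝ E).surjective l
  simpa using b.sum_sq_norm_inner_left v

theorem laplacian_comp {F F' : ℝ → ℝ} {F'' : ℝ} {φ : E → ℝ} {x : E} (hφ : ContDiffAt ℝ 2 φ x)
    (hF : ∀ᶠ s in 𝓝 (φ x), HasDerivAt F (F' s) s) (hF' : HasDerivAt F' F'' (φ x)) :
    Δ (fun y => F (φ y)) x = F'' * ‖fderiv ℝ φ x‖ ^ 2 + F' (φ x) * Δ φ x := by
  have hfirst : fderiv ℝ (fun y => F (φ y)) =ᶠ[𝓝 x] fun y => F' (φ y) • fderiv ℝ φ y := by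
    filter_upwards [hφ.eventually (by simp), hφ.continuousAt.eventually hF] with y hy hFy
    exact (hFy.comp_hasFDerivAt y (hy.differentiableAt (by simp)).hasFDerivAt).fderiv
  have hsecond (v : E) : fderiv ℝ (fderiv ℝ fun y => F (φ y)) x v v =
      F'' * fderiv ℝ φ x v ^ 2 + F' (φ x) * fderiv ℝ (fderiv ℝ φ) x v v := by
    have hF'φ : HasFDerivAt (fun y => F' (φ y)) (F'' • fderiv ℝ φ x) x :=
      hF'.comp_hasFDerivAt x (hφ.differentiableAt (by simp)).hasFDerivAt
    have hφ' := (differentiableAt_fderiv_of_contDiffAt_two hφ).hasFDerivAt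
    rw [hfirst.fderiv_eq, (hF'φ.fun_smul hφ').fderiv]
    simp
    ring
  simp only [laplacian_eq_sum_fderiv_fderiv (stdOrthonormalBasis ℝ E), hsecond,
    Finset.sum_add_distrib, ← Finset.mul_sum, sum_sq_apply_orthonormalBasis]

theorem laplacian_norm_sub_sq (z x : E) :
    Δ (fun y => ‖y - z‖ ^ 2) x = 2 * finrank ℝ E := by
  have hsecond (v : E) : fderiv ℝ (fderiv ℝ fun y => ‖y - z‖ ^ 2) x v v = 2 * ‖v‖ ^ 2 := by
    have h : HasFDerivAt (fun y => (2 : ℝ) • innerSL ℝ (y - z)) ((2 : ℝ) • innerSL ℝ) x :=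
      ((innerSL ℝ).hasFDerivAt.comp x ((hasFDerivAt_id x).sub_const z)).const_smul (2 : ℝ)
    rw [funext (fderiv_norm_sub_sq z), h.fderiv]
    exact congrArg (2 * ·) (real_inner_self_eq_norm_sq v)
  simp [laplacian_eq_sum_fderiv_fderiv (stdOrthonormalBasis ℝ E), hsecond, mul_comm]

end Laplacian

section RadialLaplacian

variable {E : Type*} [NormedAddCommGroup E] [InnerProductSpace ℝ E]

theorem contDiffAt_log_norm {x : E} (hx : x ≠ 0) : ContDiffAt ℝ 2 (fun y : E => Real.log ‖y‖) x :=
  (contDiffAt_norm ℝ hx).log (norm_ne_zero_iff.2 hx)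

theorem log_norm_eq_log_norm_sub_zero_sq_div_two {V : Type*} [SeminormedAddCommGroup V] (y : V) :
    Real.log ‖y‖ = Real.log (‖y - 0‖ ^ 2) / 2 := by
  simp

theorem norm_fderiv_log_norm {x : E} (hx : x ≠ 0) :
    ‖fderiv ℝ (fun y : E => Real.log ‖y‖) x‖ = ‖x‖⁻¹ := by
  have : 0 < ‖x‖ := norm_pos_iff.2 hx
  have hlog := ((Real.hasDerivAt_log (x := ‖x - 0‖ ^ 2) (by simpa)).div_const 2).comp_hasFDerivAt x
    ((contDiff_norm_sub_sq (0 : E)).differentiable (by simp) x).hasFDerivAt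
  rw [funext log_norm_eq_log_norm_sub_zero_sq_div_two]
  refine (congrArg norm hlog.fderiv).trans ?_
  rw [norm_smul, norm_fderiv_norm_sub_sq, sub_zero, Real.norm_of_nonneg (by positivity)]
  field_simp

variable [FiniteDimensional ℝ E]

theorem laplacian_log_norm {x : E} (hx : x ≠ 0) :
    Δ (fun y : E => Real.log ‖y‖) x = ((finrank ℝ E : ℝ) - 2) / ‖x‖ ^ 2 := by
  have hx' : 0 < ‖x - 0‖ ^ 2 := by rw [sub_zero]; positivity
  have hF : ∀ᶠ q in 𝓝 (‖x - 0‖ ^ 2), HasDerivAt (fun q => Real.log q / 2) (q⁻¹ / 2) q :=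
    (eventually_ne_nhds hx'.ne').mono fun q hq => (Real.hasDerivAt_log hq).div_const 2
  rw [funext log_norm_eq_log_norm_sub_zero_sq_div_two,
    laplacian_comp (contDiff_norm_sub_sq 0).contDiffAt hF ((hasDerivAt_inv hx'.ne').div_const 2),
    norm_fderiv_norm_sub_sq, laplacian_norm_sub_sq]
  rw [sub_zero] at hx' ⊢
  field_simp
  ring

theorem laplacian_norm_rpow_mul_comp_log_norm {G G' : ℝ → ℝ} {G'' : ℝ} {x : E} (hx : x ≠ 0)
    (hG : ∀ᶠ s in 𝓝 (Real.log ‖x‖), HasDerivAt G (G' s) s)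
    (hG' : HasDerivAt G' G'' (Real.log ‖x‖)) :
    Δ (fun y : E => ‖y‖ ^ (2 - (finrank ℝ E : ℝ)) * G (Real.log ‖y‖)) x =
      ‖x‖ ^ (-(finrank ℝ E : ℝ)) *
        (G'' - ((finrank ℝ E : ℝ) - 2) * G' (Real.log ‖x‖)) := by
  have hx' : 0 < ‖x‖ := norm_pos_iff.2 hx
  set κ : ℝ := 2 - (finrank ℝ E : ℝ)
  have hexp (s : ℝ) : HasDerivAt (fun s => Real.exp (s * κ)) (Real.exp (s * κ) * κ) s := by
    simpa using ((hasDerivAt_id s).mul_const κ).exp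
  have hF : ∀ᶠ s in 𝓝 (Real.log ‖x‖), HasDerivAt (fun s => Real.exp (s * κ) * G s)
      (Real.exp (s * κ) * κ * G s + Real.exp (s * κ) * G' s) s :=
    hG.mono fun s hs => (hexp s).fun_mul hs
  have hF' := (((hexp _).mul_const κ).fun_mul hG.self_of_nhds).fun_add ((hexp _).fun_mul hG')
  have hpos : (fun y : E => ‖y‖ ^ κ * G (Real.log ‖y‖)) =ᶠ[𝓝 x]
      fun y => Real.exp (Real.log ‖y‖ * κ) * G (Real.log ‖y‖) := by
    filter_upwards [eventually_ne_nhds hx] with y hy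
    rw [Real.rpow_def_of_pos (norm_pos_iff.2 hy)]
  have hpow : ‖x‖ ^ (-(finrank ℝ E : ℝ)) = ‖x‖ ^ κ / ‖x‖ ^ 2 := by
    rw [← Real.rpow_natCast, ← Real.rpow_sub hx']
    congr 1
    push_cast
    ring
  rw [(InnerProductSpace.laplacian_congr_nhds hpos).self_of_nhds,
    laplacian_comp (contDiffAt_log_norm hx) hF hF', norm_fderiv_log_norm hx, laplacian_log_norm hx,
    ← Real.rpow_def_of_pos hx', hpow, show (finrank ℝ E : ℝ) - 2 = -κ by ring]
  ring

end RadialLaplacian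

section Supersolution

variable {E : Type*} [NormedAddCommGroup E] [InnerProductSpace ℝ E] [FiniteDimensional ℝ E]

/-- `W` is, at the point `x`, a `C²` supersolution of the stationary equation `Δ W = W ^ p`; these
are the barriers that solutions of the parabolic equation are compared with. -/
structure IsStationarySupersolutionAt (p : ℝ) (W : E → ℝ) (x : E) : Prop where
  contDiffAt : ContDiffAt ℝ 2 W x
  laplacian_le : Δ W x ≤ W x ^ p

theorem laplacian_const_mul_add_const {w : E → ℝ} {x : E} (hw : ContDiffAt ℝ 2 w x) (c M : ℝ) :
    Δ (fun y => c * w y + M) x = c * Δ w x := by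
  have hcw : ContDiffAt ℝ 2 (c • w) x := hw.const_smul c
  change Δ (c • w + fun _ : E => M) x = c * Δ w x
  rw [hcw.laplacian_add contDiffAt_const, InnerProductSpace.laplacian_smul c hw,
    InnerProductSpace.laplacian_const, smul_eq_mul, Pi.zero_apply, add_zero]

-- The power is superlinear, so multiplying by a large constant absorbs `L`.
theorem isStationarySupersolutionAt_const_mul_add_const {p L c M : ℝ} {w : E → ℝ} {x : E}
    (hp : 0 < p) (hw : ContDiffAt ℝ 2 w x) (hw₀ : 0 ≤ w x) (hΔ : Δ w x ≤ L * w x ^ p)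
    (hc : 0 < c) (hL : L ≤ c ^ (p - 1)) (hM : 0 ≤ M) :
    IsStationarySupersolutionAt p (fun y => c * w y + M) x where
  contDiffAt := (contDiffAt_const.mul hw).add contDiffAt_const
  laplacian_le := calc
    Δ (fun y => c * w y + M) x = c * Δ w x := laplacian_const_mul_add_const hw c M
    _ ≤ c * (c ^ (p - 1) * w x ^ p) := by gcongr; exact hΔ.trans (by gcongr)
    _ = (c * w x) ^ p := by
      rw [Real.mul_rpow hc.le hw₀, ← mul_assoc, ← Real.rpow_one_add' hc.le (by linarith)]
      congr 2
      ring
    _ ≤ (c * w x + M) ^ p := by gcongr; linarith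

end Supersolution

section Barrier

variable {E : Type*} [NormedAddCommGroup E]

theorem hasDerivAt_const_sub_rpow_neg (c b : ℝ) {q : ℝ} (hq : q < c) :
    HasDerivAt (fun q => (c - q) ^ (-b)) (b * (c - q) ^ (-(b + 1))) q := by
  refine (((hasDerivAt_id q).const_sub c).rpow_const (Or.inl (sub_pos.2 hq).ne')).congr_deriv ?_
  rw [neg_add', id_eq]
  ring

/-- The function `(R² - |y - z|²) ^ (-2 / (p - 1))`, which blows up on the sphere of radius `R`
around `z`; the exponent is the one for which `Δ W` and `W ^ p` blow up at the same rate. -/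
noncomputable def blowupBarrier (p R : ℝ) (z y : E) : ℝ :=
  (R ^ 2 - ‖y - z‖ ^ 2) ^ (-(2 / (p - 1)))

theorem blowupBarrier_pos (p : ℝ) {R : ℝ} {z x : E} (hx : ‖x - z‖ < R) :
    0 < blowupBarrier p R z x :=
  Real.rpow_pos_of_pos (sub_pos.2 (by gcongr)) _

theorem exists_le_blowupBarrier_on_sphere {p R : ℝ} (hp : 1 < p) (hR : 0 < R) (z : E) (B : ℝ) :
    ∃ r ∈ Ioo 0 R, ∀ y ∈ sphere z r, B ≤ blowupBarrier p R z y := by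
  have hzero : Tendsto (fun r : ℝ => R ^ 2 - r ^ 2) (𝓝[<] R) (𝓝[>] 0) := by
    refine tendsto_nhdsWithin_iff.2 ⟨?_, ?_⟩
    · have : Continuous fun r : ℝ => R ^ 2 - r ^ 2 := by fun_prop
      simpa using (this.tendsto R).mono_left nhdsWithin_le_nhds
    · filter_upwards [Ioo_mem_nhdsLT hR] with r hr
      exact sub_pos.2 (pow_lt_pow_left₀ hr.2 hr.1.le two_ne_zero)
  have hexp : -(2 / (p - 1)) < 0 := neg_neg_of_pos (div_pos two_pos (sub_pos.2 hp))
  have hblowup := (tendsto_rpow_neg_nhdsGT_zero hexp).comp hzero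
  obtain ⟨r, hB, hr⟩ := ((hblowup.eventually_ge_atTop B).and (Ioo_mem_nhdsLT hR)).exists
  refine ⟨r, hr, fun y hy => ?_⟩
  rwa [blowupBarrier, mem_sphere_iff_norm.1 hy]

theorem rpow_mul_blowupBarrier_self (p : ℝ) {R : ℝ} (hR : 0 < R) (z : E) :
    R ^ (2 / (p - 1)) * blowupBarrier p R z z = R ^ (-(2 / (p - 1))) := by
  rw [blowupBarrier, sub_self, norm_zero, zero_pow two_ne_zero, sub_zero, ← Real.rpow_natCast_mul
    hR.le, ← Real.rpow_add hR]
  congr 1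
  push_cast
  ring

variable [InnerProductSpace ℝ E]

/-- The function `|y| ^ (2 - d) * (log |y| + D) ^ (-1 / (p - 1))` in dimension `d`: the fundamental
solution of the Laplacian with a logarithmic correction. -/
noncomputable def logBarrier (p D : ℝ) (y : E) : ℝ :=
  ‖y‖ ^ (2 - (finrank ℝ E : ℝ)) * (Real.log ‖y‖ + D) ^ (-(p - 1)⁻¹)

/-- The constant of the Keller–Osserman estimate in dimension `d`, chosen so that its `(p - 1)`-st
power is the factor by which `Δ W` may exceed `R² W ^ p` for the barrier `W = blowupBarrier p R z`.
-/
noncomputable def kellerOssermanConst (d : ℕ) (p : ℝ) : ℝ :=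
  (2 * (2 / (p - 1)) * (2 * (2 / (p - 1) + 1) + d)) ^ (p - 1)⁻¹

theorem kellerOssermanConst_pos (d : ℕ) {p : ℝ} (hp : 1 < p) : 0 < kellerOssermanConst d p := by
  have : 0 < p - 1 := sub_pos.2 hp
  unfold kellerOssermanConst
  positivity

theorem contDiffAt_blowupBarrier (p : ℝ) {R : ℝ} {z x : E} (hx : ‖x - z‖ < R) :
    ContDiffAt ℝ 2 (blowupBarrier p R z) x :=
  (contDiffAt_const.sub (contDiff_norm_sub_sq z).contDiffAt).rpow_const_of_ne
    (sub_pos.2 (by gcongr)).ne'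

theorem logBarrier_nonneg (p : ℝ) {D : ℝ} {x : E} (hτ : 1 ≤ Real.log ‖x‖ + D) :
    0 ≤ logBarrier p D x := by
  have : 0 ≤ Real.log ‖x‖ + D := by linarith
  unfold logBarrier
  positivity

theorem logBarrier_one_sub_log_norm (p : ℝ) (x : E) :
    logBarrier p (1 - Real.log ‖x‖) x = ‖x‖ ^ (2 - (finrank ℝ E : ℝ)) := by
  simp [logBarrier]

theorem tendsto_logBarrier_one_sub_log {p : ℝ} (hp : 1 < p) (x : E) :
    Tendsto (fun δ => logBarrier p (1 - Real.log δ) x) (𝓝[>] 0) (𝓝 0) := by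
  have hlog : Tendsto (fun δ => Real.log ‖x‖ + (1 - Real.log δ)) (𝓝[>] 0) atTop :=
    tendsto_atTop_add_const_left _ _ <| tendsto_atTop_add_const_left _ _ <|
      tendsto_neg_atBot_atTop.comp Real.tendsto_log_nhdsGT_zero
  simpa [logBarrier] using ((tendsto_rpow_neg_atTop (inv_pos.2 (sub_pos.2 hp))).comp hlog).const_mul
    (‖x‖ ^ (2 - (finrank ℝ E : ℝ)))

theorem contDiffAt_logBarrier (p : ℝ) {D : ℝ} {x : E} (hx : x ≠ 0) (hτ : 1 ≤ Real.log ‖x‖ + D) :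
    ContDiffAt ℝ 2 (logBarrier p D) x :=
  ((contDiffAt_norm ℝ hx).rpow_const_of_ne (norm_ne_zero_iff.2 hx)).mul
    (((contDiffAt_log_norm hx).add contDiffAt_const).rpow_const_of_ne (by linarith))

variable [FiniteDimensional ℝ E]

theorem laplacian_sq_sub_norm_sub_sq_rpow_neg_le {b R : ℝ} (hb : 0 ≤ b) {z x : E}
    (hx : ‖x - z‖ < R) :
    Δ (fun y => (R ^ 2 - ‖y - z‖ ^ 2) ^ (-b)) x ≤
      2 * b * (2 * (b + 1) + finrank ℝ E) * R ^ 2 * (R ^ 2 - ‖x - z‖ ^ 2) ^ (-(b + 2)) := by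
  have hq : ‖x - z‖ ^ 2 < R ^ 2 := by gcongr
  rw [laplacian_comp (contDiff_norm_sub_sq z).contDiffAt
    ((eventually_lt_nhds hq).mono fun q => hasDerivAt_const_sub_rpow_neg (R ^ 2) b)
    ((hasDerivAt_const_sub_rpow_neg (R ^ 2) (b + 1) hq).const_mul b),
    norm_fderiv_norm_sub_sq, laplacian_norm_sub_sq]
  have hq₀ : 0 ≤ ‖x - z‖ ^ 2 := by positivity
  have hρ : 0 < R ^ 2 - ‖x - z‖ ^ 2 := sub_pos.2 hq
  have hsucc : (R ^ 2 - ‖x - z‖ ^ 2) ^ (-(b + 1)) =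
      (R ^ 2 - ‖x - z‖ ^ 2) ^ (-(b + 2)) * (R ^ 2 - ‖x - z‖ ^ 2) := by
    rw [← Real.rpow_add_one hρ.ne']
    congr 1
    ring
  rw [hsucc, add_assoc b 1 1, one_add_one_eq_two, mul_pow]
  generalize ‖x - z‖ ^ 2 = q at *
  calc _ = 2 * b * (2 * (b + 1) * q + finrank ℝ E * (R ^ 2 - q)) * (R ^ 2 - q) ^ (-(b + 2)) := by
        ring
    _ ≤ 2 * b * (2 * (b + 1) * R ^ 2 + finrank ℝ E * R ^ 2) * (R ^ 2 - q) ^ (-(b + 2)) := by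
        gcongr
        linarith
    _ = _ := by ring

theorem isStationarySupersolutionAt_blowupBarrier {p R M : ℝ} (hp : 1 < p) (hM : 0 ≤ M) {z x : E}
    (hx : ‖x - z‖ < R) :
    IsStationarySupersolutionAt p (fun y => kellerOssermanConst (finrank ℝ E) p *
      R ^ (2 / (p - 1)) * blowupBarrier p R z y + M) x := by
  have hp' : 0 < p - 1 := sub_pos.2 hp
  have hR : 0 < R := (norm_nonneg _).trans_lt hx
  have hρ : 0 < R ^ 2 - ‖x - z‖ ^ 2 := sub_pos.2 (by gcongr)
  refine isStationarySupersolutionAt_const_mul_add_const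
    (L := 2 * (2 / (p - 1)) * (2 * (2 / (p - 1) + 1) + finrank ℝ E) * R ^ 2) (by linarith)
    (contDiffAt_blowupBarrier p hx) (blowupBarrier_pos p hx).le
    ((laplacian_sq_sub_norm_sub_sq_rpow_neg_le (b := 2 / (p - 1)) (by positivity) hx).trans_eq ?_)
    (mul_pos (kellerOssermanConst_pos _ hp) (by positivity)) (le_of_eq ?_) hM
  · rw [blowupBarrier, ← Real.rpow_mul hρ.le]
    congr 2
    field_simp
    ring
  · rw [kellerOssermanConst, Real.mul_rpow (by positivity) (by positivity),
      ← Real.rpow_mul (by positivity), ← Real.rpow_mul hR.le, inv_mul_cancel₀ hp'.ne',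
      div_mul_cancel₀ _ hp'.ne', Real.rpow_one, Real.rpow_two]

theorem hasDerivAt_add_const_rpow_neg (a D : ℝ) {s : ℝ} (hs : 0 < s + D) :
    HasDerivAt (fun s => (s + D) ^ (-a)) (-a * (s + D) ^ (-(a + 1))) s := by
  refine (((hasDerivAt_id s).add_const D).rpow_const (Or.inl hs.ne')).congr_deriv ?_
  rw [neg_add', id_eq, one_mul]

theorem laplacian_norm_rpow_mul_log_rpow_neg_le {a D : ℝ} (ha : 0 ≤ a) {x : E} (hx : x ≠ 0)
    (hτ : 1 ≤ Real.log ‖x‖ + D) :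
    Δ (fun y : E => ‖y‖ ^ (2 - (finrank ℝ E : ℝ)) * (Real.log ‖y‖ + D) ^ (-a)) x ≤
      a * (a + finrank ℝ E - 1) *
        (‖x‖ ^ (-(finrank ℝ E : ℝ)) * (Real.log ‖x‖ + D) ^ (-(a + 1))) := by
  have hτ₀ : 0 < Real.log ‖x‖ + D := by linarith
  have hnear : ∀ᶠ s in 𝓝 (Real.log ‖x‖), 0 < s + D :=
    (continuous_add_const D).continuousAt.eventually_const_lt hτ₀
  rw [laplacian_norm_rpow_mul_comp_log_norm hx
    (hnear.mono fun s => hasDerivAt_add_const_rpow_neg a D)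
    ((hasDerivAt_add_const_rpow_neg (a + 1) D hτ₀).const_mul (-a))]
  have hdecay : (Real.log ‖x‖ + D) ^ (-(a + 1 + 1)) ≤ (Real.log ‖x‖ + D) ^ (-(a + 1)) :=
    Real.rpow_le_rpow_of_exponent_le hτ (by linarith)
  calc _ = ‖x‖ ^ (-(finrank ℝ E : ℝ)) * (a * (a + 1) * (Real.log ‖x‖ + D) ^ (-(a + 1 + 1)) +
          (finrank ℝ E - 2) * a * (Real.log ‖x‖ + D) ^ (-(a + 1))) := by ring
    _ ≤ ‖x‖ ^ (-(finrank ℝ E : ℝ)) * (a * (a + 1) * (Real.log ‖x‖ + D) ^ (-(a + 1)) +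
          (finrank ℝ E - 2) * a * (Real.log ‖x‖ + D) ^ (-(a + 1))) := by gcongr
    _ = _ := by ring

theorem isStationarySupersolutionAt_logBarrier {p c r M D : ℝ} (hp : 1 < p)
    (hdp : (finrank ℝ E : ℝ) ≤ (finrank ℝ E - 2) * p) (hc : 0 < c)
    (hcr : (p - 1)⁻¹ * ((p - 1)⁻¹ + finrank ℝ E - 1) *
      r ^ (((finrank ℝ E : ℝ) - 2) * p - finrank ℝ E) ≤ c ^ (p - 1))
    (hM : 0 ≤ M) {x : E} (hx : x ≠ 0) (hxr : ‖x‖ ≤ r) (hτ : 1 ≤ Real.log ‖x‖ + D) :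
    IsStationarySupersolutionAt p (fun y => c * logBarrier p D y + M) x := by
  have hp' : p - 1 ≠ 0 := (sub_pos.2 hp).ne'
  have hx' : 0 < ‖x‖ := norm_pos_iff.2 hx
  have hτ₀ : 0 ≤ Real.log ‖x‖ + D := by linarith
  have hd : (1 : ℝ) ≤ finrank ℝ E := by
    by_contra! hlt
    nlinarith [(finrank ℝ E).cast_nonneg (α := ℝ)]
  have hfactor : 0 ≤ (p - 1)⁻¹ * ((p - 1)⁻¹ + finrank ℝ E - 1) :=
    have : 0 < (p - 1)⁻¹ := inv_pos.2 (sub_pos.2 hp)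
    mul_nonneg this.le (by linarith)
  have hnorm : ‖x‖ ^ (-(finrank ℝ E : ℝ)) ≤ r ^ (((finrank ℝ E : ℝ) - 2) * p - finrank ℝ E) *
      ‖x‖ ^ ((2 - (finrank ℝ E : ℝ)) * p) := calc
    _ = ‖x‖ ^ (((finrank ℝ E : ℝ) - 2) * p - finrank ℝ E) *
        ‖x‖ ^ ((2 - (finrank ℝ E : ℝ)) * p) := by
      rw [← Real.rpow_add hx']
      congr 1
      ring
    _ ≤ _ := by gcongr
  have hpow : logBarrier p D x ^ p = ‖x‖ ^ ((2 - (finrank ℝ E : ℝ)) * p) *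
      (Real.log ‖x‖ + D) ^ (-((p - 1)⁻¹ + 1)) := by
    rw [logBarrier, Real.mul_rpow (by positivity) (by positivity), ← Real.rpow_mul hx'.le,
      ← Real.rpow_mul hτ₀]
    congr 2
    field_simp
    ring
  refine isStationarySupersolutionAt_const_mul_add_const (by linarith)
    (contDiffAt_logBarrier p hx hτ) (logBarrier_nonneg p hτ)
    ((laplacian_norm_rpow_mul_log_rpow_neg_le (inv_nonneg.2 (sub_pos.2 hp).le) hx hτ).trans ?_)
    hc hcr hM
  rw [hpow, mul_assoc _ (r ^ _), ← mul_assoc (r ^ _)]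
  gcongr

end Barrier

section Comparison

variable {n : ℕ} {p T : ℝ} {g : EuclideanSpace ℝ (Fin n) → ℝ}
  {u : EuclideanSpace ℝ (Fin n) → ℝ → ℝ}

theorem IsClassicalSolution.nonneg_of_time_nonneg (hu : IsClassicalSolution n p g u)
    {x : EuclideanSpace ℝ (Fin n)} (hx : x ≠ 0) {t : ℝ} (ht : 0 ≤ t) : 0 ≤ u x t := by
  rcases ht.eq_or_lt with rfl | htpos
  · have hcont : ContinuousOn (u x) (Ici 0) :=
      ContinuousOn.comp (g := fun q : EuclideanSpace ℝ (Fin n) × ℝ => u q.1 q.2)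
        (f := fun s => (x, s)) hu.continuousOn (by fun_prop) fun _ hs => ⟨hx, hs⟩
    exact ge_of_tendsto ((hcont 0 self_mem_Ici).mono Ioi_subset_Ici_self)
      (eventually_mem_nhdsWithin.mono fun s hs => hu.nonneg x hx s hs)
  · exact hu.nonneg x hx t htpos

theorem IsClassicalSolution.deriv_nonpos_of_isLocalMax_sub (hu : IsClassicalSolution n p g u)
    (hp : 0 ≤ p) {W : EuclideanSpace ℝ (Fin n) → ℝ} {x : EuclideanSpace ℝ (Fin n)} (hx : x ≠ 0)
    {t : ℝ} (ht : 0 < t) (hW : IsStationarySupersolutionAt p W x) (hW₀ : 0 ≤ W x)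
    (hWu : W x ≤ u x t) (hmax : IsLocalMax (fun y => u y t - W y) x) : deriv (u x) t ≤ 0 := by
  have hut := hu.contDiff_space x hx t ht
  have hΔ : Δ (fun y => u y t) x ≤ Δ W x := by
    rw [← sub_nonpos, ← hut.laplacian_sub hW.contDiffAt]
    exact laplacian_nonpos_of_isLocalMax (hut.sub hW.contDiffAt) hmax
  calc deriv (u x) t = Δ (fun y => u y t) x - u x t ^ p := by
        rw [hu.pde x hx t ht, laplacian_eq_innerProductSpace_laplacian hut]
    _ ≤ W x ^ p - u x t ^ p := by gcongr; exact hΔ.trans hW.laplacian_le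
    _ ≤ 0 := sub_nonpos.2 (by gcongr)

theorem IsClassicalSolution.le_add_mul_time (hu : IsClassicalSolution n p g u) (hp : 0 ≤ p)
    {K : Set (EuclideanSpace ℝ (Fin n))} (hK : IsCompact K) (hK₀ : 0 ∉ K)
    {W : EuclideanSpace ℝ (Fin n) → ℝ} (hWc : ContinuousOn W K) (hW₀ : ∀ x ∈ K, 0 ≤ W x)
    (hW : ∀ x ∈ interior K, IsStationarySupersolutionAt p W x) (hgW : ∀ x ∈ K, g x ≤ W x)
    (hfrontier : ∀ x ∈ frontier K, ∀ t ∈ Icc 0 T, u x t ≤ W x) {ε : ℝ} (hε : 0 < ε) :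
    ∀ x ∈ K, ∀ t ∈ Icc 0 T, u x t ≤ W x + ε * t := by
  have hne : ∀ x ∈ K, x ≠ 0 := fun x hx h => hK₀ (h ▸ hx)
  intro x hx t ht
  have hcont : ContinuousOn (fun q : EuclideanSpace ℝ (Fin n) × ℝ => u q.1 q.2 - W q.1 - ε * q.2)
      (K ×ˢ Icc 0 T) :=
    ((hu.continuousOn.mono fun q hq => ⟨hne _ hq.1, hq.2.1⟩).sub
      (hWc.comp continuousOn_fst fun q hq => hq.1)).sub (by fun_prop)
  obtain ⟨⟨y, s⟩, ⟨hy, hs⟩, hmax⟩ := (hK.prod isCompact_Icc).exists_isMaxOn ⟨(x, t), hx, ht⟩ hcont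
  have hle {z r} (hz : z ∈ K) (hr : r ∈ Icc 0 T) : u z r - W z - ε * r ≤ u y s - W y - ε * s :=
    hmax (mk_mem_prod hz hr)
  by_contra! hlt
  have hys : W y + ε * s < u y s := by linarith [hle hx ht]
  have hWu : W y < u y s := by linarith [mul_nonneg hε.le hs.1]
  have hs₀ : 0 < s := by
    refine hs.1.lt_of_ne fun h => (hgW y hy).not_gt ?_
    rwa [← hu.initial y (hne y hy), h]
  have hyint : y ∈ interior K := by
    by_contra hyint
    exact (hfrontier y ⟨subset_closure hy, hyint⟩ s hs).not_gt hWu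
  have hspace : deriv (u y) s ≤ 0 := by
    refine hu.deriv_nonpos_of_isLocalMax_sub hp (hne y hy) hs₀ (hW y hyint) (hW₀ y hy) hWu.le ?_
    filter_upwards [mem_interior_iff_mem_nhds.1 hyint] with z hz
    linarith [hle hz hs]
  have htime : 0 ≤ deriv (u y) s - ε := by
    have hu' := ((hu.contDiff_time y (hne y hy) s hs₀).differentiableAt (by simp)).hasDerivAt
    have hderiv : HasDerivAt (fun r => u y r - ε * r) (deriv (u y) s - ε) s := by
      simpa using hu'.fun_sub ((hasDerivAt_id s).const_mul ε)
    rw [← hderiv.deriv]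
    refine deriv_nonneg_of_isMaxOn_Icc_right hs₀ hderiv.differentiableAt fun r hr => ?_
    change u y r - ε * r ≤ u y s - ε * s
    linarith [hle hy ⟨hr.1, hr.2.trans hs.2⟩]
  linarith

theorem IsClassicalSolution.le_of_isStationarySupersolutionAt (hu : IsClassicalSolution n p g u)
    (hp : 0 ≤ p) {K : Set (EuclideanSpace ℝ (Fin n))} (hK : IsCompact K) (hK₀ : 0 ∉ K)
    {W : EuclideanSpace ℝ (Fin n) → ℝ} (hWc : ContinuousOn W K) (hW₀ : ∀ x ∈ K, 0 ≤ W x)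
    (hW : ∀ x ∈ interior K, IsStationarySupersolutionAt p W x) (hgW : ∀ x ∈ K, g x ≤ W x)
    (hfrontier : ∀ x ∈ frontier K, ∀ t ∈ Icc 0 T, u x t ≤ W x) :
    ∀ x ∈ K, ∀ t ∈ Icc 0 T, u x t ≤ W x := by
  intro x hx t ht
  have hlim : Tendsto (fun ε : ℝ => W x + ε * t) (𝓝[>] 0) (𝓝 (W x)) := by
    have : Continuous fun ε : ℝ => W x + ε * t := by fun_prop
    simpa using (this.tendsto 0).mono_left nhdsWithin_le_nhds
  refine ge_of_tendsto hlim (eventually_mem_nhdsWithin.mono fun ε hε => ?_)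
  exact hu.le_add_mul_time hp hK hK₀ hWc hW₀ hW hgW hfrontier hε x hx t ht

end Comparison

section KellerOsserman

variable {n : ℕ} {p M : ℝ} {g : EuclideanSpace ℝ (Fin n) → ℝ}
  {u : EuclideanSpace ℝ (Fin n) → ℝ → ℝ}

theorem IsClassicalSolution.le_add_kellerOssermanConst_mul_rpow (hu : IsClassicalSolution n p g u)
    (hp : 1 < p) (hM : 0 ≤ M) {z : EuclideanSpace ℝ (Fin n)} {R : ℝ} (hR : 0 < R)
    (hz : 0 ∉ closedBall z R) (hg : ∀ y ∈ closedBall z R, g y ≤ M) {t : ℝ} (ht : 0 ≤ t) :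
    u z t ≤ M + kellerOssermanConst n p * R ^ (-(2 / (p - 1))) := by
  have hc : 0 < kellerOssermanConst n p * R ^ (2 / (p - 1)) :=
    mul_pos (kellerOssermanConst_pos n hp) (by positivity)
  obtain ⟨B, hB⟩ : BddAbove ((fun q : EuclideanSpace ℝ (Fin n) × ℝ => u q.1 q.2) ''
      closedBall z R ×ˢ Icc 0 t) :=
    ((isCompact_closedBall z R).prod isCompact_Icc).bddAbove_image <|
      hu.continuousOn.mono fun q hq => ⟨fun h => hz (h ▸ hq.1), hq.2.1⟩
  obtain ⟨r, ⟨hr, hrR⟩, hsphere⟩ := exists_le_blowupBarrier_on_sphere hp hR z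
    (B / (kellerOssermanConst n p * R ^ (2 / (p - 1))))
  have hball : closedBall z r ⊆ closedBall z R := closedBall_subset_closedBall hrR.le
  have hlt {y} (hy : y ∈ closedBall z r) : ‖y - z‖ < R :=
    (mem_closedBall_iff_norm.1 hy).trans_lt hrR
  have hW {y} (hy : y ∈ closedBall z r) : IsStationarySupersolutionAt p (fun y =>
      kellerOssermanConst n p * R ^ (2 / (p - 1)) * blowupBarrier p R z y + M) y := by
    simpa using isStationarySupersolutionAt_blowupBarrier hp hM (hlt hy)
  have hbarrier {y} (hy : y ∈ closedBall z r) :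
      0 ≤ kellerOssermanConst n p * R ^ (2 / (p - 1)) * blowupBarrier p R z y :=
    mul_nonneg hc.le (blowupBarrier_pos p (hlt hy)).le
  have hcomparison := hu.le_of_isStationarySupersolutionAt (by linarith)
    (isCompact_closedBall z r) (fun h => hz (hball h))
    (fun y hy => (hW hy).contDiffAt.continuousAt.continuousWithinAt)
    (fun y hy => add_nonneg (hbarrier hy) hM) (fun y hy => hW (interior_subset hy))
    (fun y hy => (hg y (hball hy)).trans (le_add_of_nonneg_left (hbarrier hy)))
    (fun y hy s hs => ?_) z (mem_closedBall_self hr.le) t ⟨ht, le_rfl⟩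
  · rwa [mul_assoc, rpow_mul_blowupBarrier_self p hR, add_comm] at hcomparison
  · rw [frontier_closedBall z hr.ne'] at hy
    calc u y s ≤ B := hB ⟨(y, s), ⟨hball (sphere_subset_closedBall hy), hs⟩, rfl⟩
      _ ≤ _ := (div_le_iff₀' hc).1 (hsphere y hy)
      _ ≤ _ := le_add_of_nonneg_right hM

theorem IsClassicalSolution.le_add_mul_norm_rpow (hu : IsClassicalSolution n p g u) (hp : 1 < p)
    (hM : 0 ≤ M) (hg : ∀ y ≠ 0, g y ≤ M) {x : EuclideanSpace ℝ (Fin n)} (hx : x ≠ 0) {t : ℝ}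
    (ht : 0 ≤ t) :
    u x t ≤ M + kellerOssermanConst n p * 2 ^ (2 / (p - 1)) * ‖x‖ ^ (-(2 / (p - 1))) := by
  have hx' : 0 < ‖x‖ := norm_pos_iff.2 hx
  have hball : 0 ∉ closedBall x (‖x‖ / 2) := by
    rw [mem_closedBall, dist_zero_left]
    linarith
  refine (hu.le_add_kellerOssermanConst_mul_rpow hp hM (half_pos hx') hball
    (fun y hy => hg y fun h => hball (h ▸ hy)) ht).trans_eq ?_
  rw [Real.div_rpow hx'.le two_pos.le, Real.rpow_neg two_pos.le, div_inv_eq_mul]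
  ring

end KellerOsserman

section RemovableSingularity

theorem isCompact_norm_preimage_Icc {E : Type*} [SeminormedAddCommGroup E] [ProperSpace E]
    (δ r : ℝ) : IsCompact (norm ⁻¹' Icc δ r : Set E) :=
  (isCompact_closedBall 0 r).of_isClosed_subset (isClosed_Icc.preimage continuous_norm)
    fun _ hy => mem_closedBall_zero_iff.2 hy.2

variable {n : ℕ} {p T : ℝ} {g : EuclideanSpace ℝ (Fin n) → ℝ}
  {u : EuclideanSpace ℝ (Fin n) → ℝ → ℝ}

theorem IsClassicalSolution.le_const_mul_logBarrier_add (hu : IsClassicalSolution n p g u)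
    (hp : 1 < p) (hnp : (n : ℝ) ≤ (n - 2) * p) {c M δ r : ℝ} (hδ : 0 < δ) (hδr : δ ≤ r)
    (hc : 0 < c) (hcr : (p - 1)⁻¹ * ((p - 1)⁻¹ + n - 1) * r ^ (((n : ℝ) - 2) * p - n) ≤ c ^ (p - 1))
    (hM : 0 ≤ M) (hg : ∀ y ≠ 0, g y ≤ M)
    (hinner : ∀ y, ‖y‖ = δ → ∀ t ∈ Icc 0 T, u y t ≤ c * ‖y‖ ^ (2 - (n : ℝ)) + M)
    (houter : ∀ y, ‖y‖ = r → ∀ t ∈ Icc 0 T, u y t ≤ M) :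
    ∀ x, ‖x‖ ∈ Icc δ r → ∀ t ∈ Icc 0 T, u x t ≤ c * logBarrier p (1 - Real.log δ) x + M := by
  have hne {y : EuclideanSpace ℝ (Fin n)} (hy : ‖y‖ ∈ Icc δ r) : y ≠ 0 :=
    norm_pos_iff.1 (hδ.trans_le hy.1)
  have hτ {y : EuclideanSpace ℝ (Fin n)} (hy : ‖y‖ ∈ Icc δ r) :
      1 ≤ Real.log ‖y‖ + (1 - Real.log δ) := by
    linarith [Real.log_le_log hδ hy.1]
  have hW {y : EuclideanSpace ℝ (Fin n)} (hy : ‖y‖ ∈ Icc δ r) :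
      IsStationarySupersolutionAt p (fun y => c * logBarrier p (1 - Real.log δ) y + M) y :=
    isStationarySupersolutionAt_logBarrier hp (by simpa) hc (by simpa) hM (hne hy) hy.2 (hτ hy)
  have hbarrier {y : EuclideanSpace ℝ (Fin n)} (hy : ‖y‖ ∈ Icc δ r) :
      0 ≤ c * logBarrier p (1 - Real.log δ) y :=
    mul_nonneg hc.le (logBarrier_nonneg p (hτ hy))
  refine hu.le_of_isStationarySupersolutionAt (by linarith) (isCompact_norm_preimage_Icc δ r)
    (fun h => hne h rfl) (fun y hy => (hW hy).contDiffAt.continuousAt.continuousWithinAt)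
    (fun y hy => add_nonneg (hbarrier hy) hM) (fun y hy => hW (mem_preimage.1 (interior_subset hy)))
    (fun y hy => (hg y (hne hy)).trans (le_add_of_nonneg_left (hbarrier hy))) fun y hy t ht => ?_
  have hsphere : ‖y‖ = δ ∨ ‖y‖ = r := by
    simpa [frontier_Icc hδr] using continuous_norm.frontier_preimage_subset _ hy
  rcases hsphere with hyδ | hyr
  · rw [← hyδ, logBarrier_one_sub_log_norm, finrank_euclideanSpace_fin]
    exact hinner y hyδ t ht
  · exact (houter y hyr t ht).trans
      (le_add_of_nonneg_left (hbarrier ⟨hδr.trans_eq hyr.symm, hyr.le⟩))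

-- As the inner radius `δ` of the annulus tends to `0`, the barrier tends to `0` at each point.
theorem IsClassicalSolution.le_of_eventually_le_const_mul_norm_rpow_add
    (hu : IsClassicalSolution n p g u) (hp : 1 < p) (hnp : (n : ℝ) ≤ (n - 2) * p) {C M r : ℝ}
    (hM : 0 ≤ M) (hg : ∀ y ≠ 0, g y ≤ M)
    (hnear : ∀ᶠ y in 𝓝[≠] 0, ∀ t ∈ Icc 0 T, u y t ≤ C * ‖y‖ ^ (2 - (n : ℝ)) + M)
    (hsphere : ∀ y, ‖y‖ = r → ∀ t ∈ Icc 0 T, u y t ≤ M) {x : EuclideanSpace ℝ (Fin n)}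
    (hx : x ≠ 0) (hxr : ‖x‖ ≤ r) {t : ℝ} (ht : t ∈ Icc 0 T) : u x t ≤ M := by
  obtain ⟨c, ⟨hcr, hc⟩, hCc⟩ := ((((tendsto_rpow_atTop (sub_pos.2 hp)).eventually_ge_atTop
    ((p - 1)⁻¹ * ((p - 1)⁻¹ + n - 1) * r ^ (((n : ℝ) - 2) * p - n))).and
    (eventually_gt_atTop 0)).and (eventually_ge_atTop C)).exists
  obtain ⟨ρ, hρ, hnear⟩ := Metric.eventually_nhds_iff.1 (eventually_nhdsWithin_iff.1 hnear)
  have hlim : Tendsto (fun δ => c * logBarrier p (1 - Real.log δ) x + M) (𝓝[>] 0) (𝓝 M) := by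
    simpa using ((tendsto_logBarrier_one_sub_log hp x).const_mul c).add_const M
  refine ge_of_tendsto hlim ?_
  filter_upwards [Ioo_mem_nhdsGT (lt_min hρ (norm_pos_iff.2 hx))] with δ ⟨hδ, hδlt⟩
  obtain ⟨hδρ, hδx⟩ := lt_min_iff.1 hδlt
  refine hu.le_const_mul_logBarrier_add hp hnp hδ (hδx.le.trans hxr) hc hcr hM hg
    (fun y hy s hs => ?_) hsphere x ⟨hδx.le, hxr⟩ t ht
  calc u y s ≤ C * ‖y‖ ^ (2 - (n : ℝ)) + M :=
        hnear (by simpa [hy]) (norm_pos_iff.1 (hy ▸ hδ)) s hs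
    _ ≤ c * ‖y‖ ^ (2 - (n : ℝ)) + M := by gcongr

end RemovableSingularity

section MaximumPrinciple

theorem one_lt_of_le_sub_two_mul {d p : ℝ} (hd : 2 < d) (hdp : d ≤ (d - 2) * p) : 1 < p := by
  nlinarith

theorem two_div_sub_one_le_sub_two {d p : ℝ} (hp : 1 < p) (hdp : d ≤ (d - 2) * p) :
    2 / (p - 1) ≤ d - 2 := by
  rw [div_le_iff₀ (sub_pos.2 hp)]
  linarith

theorem eventually_norm_rpow_le_norm_rpow {E : Type*} [NormedAddCommGroup E] {a b : ℝ}
    (hab : a ≤ b) : ∀ᶠ y : E in 𝓝[≠] 0, ‖y‖ ^ b ≤ ‖y‖ ^ a := by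
  filter_upwards [self_mem_nhdsWithin, mem_nhdsWithin_of_mem_nhds (closedBall_mem_nhds 0 one_pos)]
    with y hy hy₁
  exact Real.rpow_le_rpow_of_exponent_ge (norm_pos_iff.2 hy) (mem_closedBall_zero_iff.1 hy₁) hab

theorem triviality_of_solutions_with_zero_data_general
    (n : ℕ) (hn : 3 ≤ n) (p : ℝ) (hpn : (n : ℝ) / ((n : ℝ) - 2) ≤ p)
    (g : EuclideanSpace ℝ (Fin n) → ℝ) (u : EuclideanSpace ℝ (Fin n) → ℝ → ℝ)
    (hu : IsClassicalSolution n p g u) (M : ℝ) (hg : ∀ x, x ≠ 0 → g x ≤ M) :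
    ∀ x : EuclideanSpace ℝ (Fin n), x ≠ 0 → ∀ t : ℝ, 0 ≤ t → u x t ≤ M := by
  intro x hx t ht
  have hn₂ : (2 : ℝ) < n := by exact_mod_cast hn
  have hnp : (n : ℝ) ≤ (n - 2) * p := (div_le_iff₀' (sub_pos.2 hn₂)).1 hpn
  have hp : 1 < p := one_lt_of_le_sub_two_mul hn₂ hnp
  have hM : 0 ≤ M :=
    (hu.nonneg_of_time_nonneg hx le_rfl).trans ((hu.initial x hx).trans_le (hg x hx))
  set C := kellerOssermanConst n p * 2 ^ (2 / (p - 1))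
  have hC : 0 < C := mul_pos (kellerOssermanConst_pos n hp) (by positivity)
  have hbound {y} (hy : y ≠ 0) {s} (hs : 0 ≤ s) : u y s ≤ M + C * ‖y‖ ^ (-(2 / (p - 1))) :=
    hu.le_add_mul_norm_rpow hp hM hg hy hs
  refine le_of_forall_pos_le_add fun ε hε => ?_
  have hnear : ∀ᶠ y in 𝓝[≠] 0, ∀ s ∈ Icc 0 t, u y s ≤ C * ‖y‖ ^ (2 - (n : ℝ)) + (M + ε) := by
    have hexp : 2 - (n : ℝ) ≤ -(2 / (p - 1)) := by
      linarith [two_div_sub_one_le_sub_two hp hnp]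
    filter_upwards [eventually_norm_rpow_le_norm_rpow hexp, self_mem_nhdsWithin] with y hy hy₀ s hs
    linarith [hbound hy₀ hs.1, mul_le_mul_of_nonneg_left hy hC.le]
  have hdecay : Tendsto (fun r : ℝ => C * r ^ (-(2 / (p - 1)))) atTop (𝓝 0) := by
    simpa using (tendsto_rpow_neg_atTop (div_pos two_pos (sub_pos.2 hp))).const_mul C
  obtain ⟨r, hr, hxr⟩ :=
    ((hdecay.eventually_le_const hε).and (eventually_ge_atTop ‖x‖)).exists
  have hsphere : ∀ y, ‖y‖ = r → ∀ s ∈ Icc 0 t, u y s ≤ M + ε := fun y hy s hs => by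
    have hy₀ : y ≠ 0 := norm_pos_iff.1 (hy ▸ (norm_pos_iff.2 hx).trans_le hxr)
    exact (hbound hy₀ hs.1).trans (by rw [hy]; gcongr)
  exact hu.le_of_eventually_le_const_mul_norm_rpow_add hp hnp (by positivity)
    (fun y hy => (hg y hy).trans (le_add_of_nonneg_right hε.le)) hnear hsphere hx hxr ⟨ht, le_rfl⟩

end MaximumPrinciple

/-- if `n ≥ 3` and `p ≥ n/(n-2)`, the only classical solution of (P)
with vanishing initial data is the identically zero function. -/
theorem triviality_of_solutions_with_zero_data
    (n : ℕ) (hn : 3 ≤ n) (p : ℝ) (hpn : (n : ℝ) / ((n : ℝ) - 2) ≤ p)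
    (u : EuclideanSpace ℝ (Fin n) → ℝ → ℝ)
    (hu : IsClassicalSolution n p (fun _ => 0) u) :
    ∀ x : EuclideanSpace ℝ (Fin n), x ≠ 0 → ∀ t : ℝ, 0 ≤ t → u x t = 0 := fun x hx t ht =>
  le_antisymm (triviality_of_solutions_with_zero_data_general n hn p hpn _ u hu 0
    (fun _ _ => le_rfl) x hx t ht) (hu.nonneg_of_time_nonneg hx ht)
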